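/- Let Ω ⊆ ℝ^N be a bounded open set and p ≥ 2 a real number. Suppose (y_k) and (z_k) are sequences in L^p(Ω) with y_k → y strongly in L^p(Ω) and z_k → z weakly in L^p(Ω). Then liminf_{k→∞} ∫_Ω (|y_k|^{p−2}y_k + |z_k|^{p−2}z_k) z_k dx ≥ ∫_Ω (|y|^{p−2}y + |z|^{p−2}z) z dx. (This is the (𝔄)-property of the operator F(y,z) = |y|^{p−2}y + |z|^{p−2}z.) -/

import Mathlib

open MeasureTheory Filter Topology

/-
Let `J f = |f|^{p-2} f` be the duality map from `L^p` to `L^q`, and write `⟨f, g⟩ = ∫ f g`, so that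
the functional in question is `⟨z, J y⟩ + ‖z‖ ^ p`. The first term converges along the sequence:
`J` is norm continuous (Vitali's convergence theorem, since `J` turns `p`-integrability into
`q`-integrability uniformly), and weakly convergent functionals may be evaluated along a norm
convergent sequence (Banach–Steinhaus). The second term is convex with subgradient `p J`, so it is
bounded below by `‖z₀‖ ^ p + p ⟨z_k - z₀, J z₀⟩`, which tends to `‖z₀‖ ^ p` by weak convergence.
-/

section Nemytskii

variable {α E F : Type*} [MeasurableSpace α] [NormedAddCommGroup E] [NormedAddCommGroup F]
  {μ : Measure α} {p q : ENNReal} {r C : ℝ} {φ : E → F}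

theorem exists_pos_mul_rpow_le (C : ℝ) (hr : 0 < r) {ε : ℝ} (hε : 0 < ε) :
    ∃ δ > 0, C * δ ^ r ≤ ε := by
  have hlim : Tendsto (fun δ : ℝ => C * δ ^ r) (𝓝[>] 0) (𝓝 0) := by
    have hcont : ContinuousAt (fun δ : ℝ => C * δ ^ r) 0 :=
      (Real.continuousAt_rpow_const 0 r (.inr hr.le)).const_mul C
    simpa [ContinuousAt, Real.zero_rpow hr.ne'] using hcont.mono_left nhdsWithin_le_nhds
  obtain ⟨δ, hδε, hδ⟩ := ((hlim.eventually (gt_mem_nhds hε)).and self_mem_nhdsWithin).exists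
  exact ⟨δ, hδ, hδε.le⟩

theorem eLpNorm_comp_le_of_norm_le_rpow (hr : 0 < r) (hpq : p = q * ENNReal.ofReal r)
    (hφ : ∀ x, ‖φ x‖ ≤ C * ‖x‖ ^ r) (f : α → E) :
    eLpNorm (φ ∘ f) q μ ≤ ENNReal.ofReal C * eLpNorm f p μ ^ r := by
  rw [hpq, ← eLpNorm_norm_rpow f hr]
  refine eLpNorm_le_mul_eLpNorm_of_ae_le_mul (ae_of_all _ fun x => ?_) q
  simpa only [Function.comp_apply, Real.norm_of_nonneg (Real.rpow_nonneg (norm_nonneg _) r)]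
    using hφ (f x)

theorem eLpNorm_indicator_comp_le_of_norm_le_rpow (hr : 0 < r) (hpq : p = q * ENNReal.ofReal r)
    (hφ : ∀ x, ‖φ x‖ ≤ C * ‖x‖ ^ r) {δ ε : ℝ} (hδ : 0 < δ) (hδε : C * δ ^ r ≤ ε)
    {f : α → E} {s : Set α} (hf : eLpNorm (s.indicator f) p μ ≤ ENNReal.ofReal δ) :
    eLpNorm (s.indicator (φ ∘ f)) q μ ≤ ENNReal.ofReal ε := by
  have hφ0 : φ 0 = 0 := norm_le_zero_iff.1 (by simpa [Real.zero_rpow hr.ne'] using hφ 0)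
  rw [Set.indicator_comp_of_zero hφ0]
  calc eLpNorm (φ ∘ s.indicator f) q μ
      ≤ ENNReal.ofReal C * eLpNorm (s.indicator f) p μ ^ r :=
        eLpNorm_comp_le_of_norm_le_rpow hr hpq hφ _
    _ ≤ ENNReal.ofReal C * ENNReal.ofReal δ ^ r := by gcongr
    _ = ENNReal.ofReal (C * δ ^ r) := by
        rw [ENNReal.ofReal_rpow_of_pos hδ, ← ENNReal.ofReal_mul' (Real.rpow_nonneg hδ.le r)]
    _ ≤ ENNReal.ofReal ε := ENNReal.ofReal_le_ofReal hδε

theorem memLp_comp_of_norm_le_rpow (hr : 0 < r) (hpq : p = q * ENNReal.ofReal r)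
    (hφc : Continuous φ) (hφ : ∀ x, ‖φ x‖ ≤ C * ‖x‖ ^ r) {f : α → E} (hf : MemLp f p μ) :
    MemLp (φ ∘ f) q μ := by
  refine ⟨hφc.comp_aestronglyMeasurable hf.1,
    (eLpNorm_comp_le_of_norm_le_rpow hr hpq hφ f).trans_lt ?_⟩
  exact ENNReal.mul_lt_top ENNReal.ofReal_lt_top (ENNReal.rpow_lt_top_of_nonneg hr.le hf.2.ne)

theorem unifIntegrable_comp_of_norm_le_rpow {ι : Type*} (hr : 0 < r)
    (hpq : p = q * ENNReal.ofReal r) (hφ : ∀ x, ‖φ x‖ ≤ C * ‖x‖ ^ r) {f : ι → α → E}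
    (hf : UnifIntegrable f p μ) : UnifIntegrable (fun i => φ ∘ f i) q μ := by
  intro ε hε
  obtain ⟨η, hη, hηε⟩ := exists_pos_mul_rpow_le C hr hε
  obtain ⟨δ, hδ, hfδ⟩ := hf hη
  exact ⟨δ, hδ, fun i s hs hμs =>
    eLpNorm_indicator_comp_le_of_norm_le_rpow hr hpq hφ hη hηε (hfδ i s hs hμs)⟩

theorem unifTight_comp_of_norm_le_rpow {ι : Type*} (hr : 0 < r)
    (hpq : p = q * ENNReal.ofReal r) (hφ : ∀ x, ‖φ x‖ ≤ C * ‖x‖ ^ r) {f : ι → α → E}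
    (hf : UnifTight f p μ) : UnifTight (fun i => φ ∘ f i) q μ := by
  rw [unifTight_iff_real] at hf ⊢
  intro ε hε
  obtain ⟨η, hη, hηε⟩ := exists_pos_mul_rpow_le C hr hε
  obtain ⟨s, hμs, hfs⟩ := hf hη
  exact ⟨s, hμs, fun i => eLpNorm_indicator_comp_le_of_norm_le_rpow hr hpq hφ hη hηε (hfs i)⟩

theorem tendsto_eLpNorm_comp_sub_of_norm_le_rpow (hp : 1 ≤ p) (hp_top : p ≠ ⊤) (hq : 1 ≤ q)
    (hq_top : q ≠ ⊤) (hr : 0 < r) (hpq : p = q * ENNReal.ofReal r) (hφc : Continuous φ)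
    (hφ : ∀ x, ‖φ x‖ ≤ C * ‖x‖ ^ r) {f : ℕ → α → E} {g : α → E} (hf : ∀ n, MemLp (f n) p μ)
    (hg : MemLp g p μ) (hfg : Tendsto (fun n => eLpNorm (f n - g) p μ) atTop (𝓝 0)) :
    Tendsto (fun n => eLpNorm (φ ∘ f n - φ ∘ g) q μ) atTop (𝓝 0) := by
  refine tendsto_of_subseq_tendsto fun ns hns => ?_
  have hns_measure : TendstoInMeasure μ (fun n => f (ns n)) atTop g :=
    ((tendstoInMeasure_iff_tendsto_Lp hp hp_top (fun _ => hf _) hg).2 (hfg.comp hns)).1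
  obtain ⟨ms, hms, hae⟩ := hns_measure.exists_seq_tendsto_ae
  obtain ⟨-, hui, hut⟩ := (tendstoInMeasure_iff_tendsto_Lp hp hp_top
    (fun n => hf (ns (ms n))) hg).2 (hfg.comp (hns.comp hms.tendsto_atTop))
  refine ⟨ms, tendsto_Lp_of_tendsto_ae hq hq_top
    (fun n => hφc.comp_aestronglyMeasurable (hf _).1)
    (memLp_comp_of_norm_le_rpow hr hpq hφc hφ hg)
    (unifIntegrable_comp_of_norm_le_rpow hr hpq hφ hui)
    (unifTight_comp_of_norm_le_rpow hr hpq hφ hut) ?_⟩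
  filter_upwards [hae] with x hx using (hφc.tendsto (g x)).comp hx

end Nemytskii

section DualityFun

/-- The derivative `t ↦ |t|^{p-2} t` of `|t|^p / p`, whose composition with functions is the
duality map of `L^p`. It vanishes at `0` for every `p`, also when the real power is singular. -/
noncomputable def dualityFun (p t : ℝ) : ℝ := |t| ^ (p - 2) * t

variable {p : ℝ}

theorem abs_dualityFun (hp : p ≠ 1) (t : ℝ) : |dualityFun p t| = |t| ^ (p - 1) := by
  rcases eq_or_ne t 0 with rfl | ht
  · simp [dualityFun, Real.zero_rpow (sub_ne_zero.2 hp)]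
  · rw [dualityFun, abs_mul, Real.abs_rpow_of_nonneg (abs_nonneg t), abs_abs,
      ← Real.rpow_add_one (abs_pos.2 ht).ne']
    ring_nf

theorem mul_dualityFun (hp : p ≠ 0) (t : ℝ) : t * dualityFun p t = |t| ^ p := by
  rcases eq_or_ne t 0 with rfl | ht
  · simp [Real.zero_rpow hp]
  · calc t * dualityFun p t = |t| ^ (p - 2) * |t| ^ (2 : ℝ) := by
          rw [dualityFun, Real.rpow_two, sq_abs]; ring
      _ = |t| ^ p := by rw [← Real.rpow_add (abs_pos.2 ht), sub_add_cancel]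

theorem continuous_dualityFun (hp : 1 < p) : Continuous (dualityFun p) := by
  refine continuous_iff_continuousAt.2 fun t => ?_
  rcases eq_or_ne t 0 with rfl | ht
  · have habs : Tendsto (fun t : ℝ => |t| ^ (p - 1)) (𝓝 0) (𝓝 0) := by
      simpa [Real.zero_rpow (sub_pos.2 hp).ne'] using
        (continuous_abs.rpow_const fun _ => .inr (sub_pos.2 hp).le).tendsto (0 : ℝ)
    have hzero : dualityFun p 0 = 0 := by simp [dualityFun]
    rw [ContinuousAt, hzero, tendsto_zero_iff_norm_tendsto_zero]
    simpa only [Real.norm_eq_abs, abs_dualityFun hp.ne'] using habs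
  · exact (continuous_abs.continuousAt.rpow_const (.inl (abs_pos.2 ht).ne')).mul continuousAt_id

end DualityFun

section PointwiseConvergence

variable {𝕜 E F : Type*} [NontriviallyNormedField 𝕜] [NormedAddCommGroup E] [NormedSpace 𝕜 E]
  [CompleteSpace E] [NormedAddCommGroup F] [NormedSpace 𝕜 F] {T : ℕ → E →L[𝕜] F} {T₀ : E →L[𝕜] F}

theorem exists_opNorm_le_of_tendsto_apply
    (hT : ∀ x, Tendsto (fun n => T n x) atTop (𝓝 (T₀ x))) : ∃ C, ∀ n, ‖T n‖ ≤ C := by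
  refine banach_steinhaus fun x => ?_
  obtain ⟨C, hC⟩ := (hT x).norm.bddAbove_range
  exact ⟨C, fun n => hC ⟨n, rfl⟩⟩

theorem tendsto_apply_of_tendsto_apply_of_tendsto
    (hT : ∀ x, Tendsto (fun n => T n x) atTop (𝓝 (T₀ x))) {x : ℕ → E} {x₀ : E}
    (hx : Tendsto x atTop (𝓝 x₀)) : Tendsto (fun n => T n (x n)) atTop (𝓝 (T₀ x₀)) := by
  obtain ⟨C, hC⟩ := exists_opNorm_le_of_tendsto_apply hT
  have hdiff : Tendsto (fun n => T n (x n - x₀)) atTop (𝓝 0) := by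
    refine squeeze_zero_norm (fun n => (T n).le_of_opNorm_le (hC n) _) ?_
    simpa using (tendsto_iff_norm_sub_tendsto_zero.1 hx).const_mul C
  simpa using hdiff.add (hT x₀)

end PointwiseConvergence

section DualityMap

variable {α : Type*} [MeasurableSpace α] {μ : Measure α} {p q : ℝ}

theorem ofReal_eq_ofReal_mul_ofReal_sub_one (hpq : p.HolderConjugate q) :
    ENNReal.ofReal p = ENNReal.ofReal q * ENNReal.ofReal (p - 1) := by
  rw [← ENNReal.ofReal_mul hpq.symm.nonneg, mul_comm, hpq.sub_one_mul_conj]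

theorem norm_dualityFun_le (hp : p ≠ 1) (t : ℝ) : ‖dualityFun p t‖ ≤ 1 * ‖t‖ ^ (p - 1) := by
  rw [one_mul, Real.norm_eq_abs, Real.norm_eq_abs, abs_dualityFun hp]

theorem memLp_dualityFun_comp (hpq : p.HolderConjugate q) {f : α → ℝ}
    (hf : MemLp f (ENNReal.ofReal p) μ) : MemLp (dualityFun p ∘ f) (ENNReal.ofReal q) μ :=
  memLp_comp_of_norm_le_rpow hpq.sub_one_pos (ofReal_eq_ofReal_mul_ofReal_sub_one hpq)
    (continuous_dualityFun hpq.lt) (norm_dualityFun_le hpq.lt.ne') hf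

/-- The duality map `f ↦ |f|^{p-2} f` from `L^p` to `L^q`, normalised to be homogeneous of degree
`p - 1`: it satisfies `∫ f * lpDualityMap f = ‖f‖ ^ p`. -/
noncomputable def lpDualityMap (hpq : p.HolderConjugate q) (f : Lp ℝ (ENNReal.ofReal p) μ) :
    Lp ℝ (ENNReal.ofReal q) μ :=
  (memLp_dualityFun_comp hpq (Lp.memLp f)).toLp (dualityFun p ∘ f)

theorem coeFn_lpDualityMap (hpq : p.HolderConjugate q) (f : Lp ℝ (ENNReal.ofReal p) μ) :
    lpDualityMap hpq f =ᵐ[μ] dualityFun p ∘ f :=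
  MemLp.coeFn_toLp _

theorem norm_lpDualityMap_le (hpq : p.HolderConjugate q) (f : Lp ℝ (ENNReal.ofReal p) μ) :
    ‖lpDualityMap hpq f‖ ≤ ‖f‖ ^ (p - 1) := by
  rw [lpDualityMap, Lp.norm_toLp, Lp.norm_def, ENNReal.toReal_rpow]
  refine ENNReal.toReal_mono
    (ENNReal.rpow_ne_top_of_nonneg hpq.sub_one_pos.le (Lp.eLpNorm_ne_top f)) ?_
  simpa using eLpNorm_comp_le_of_norm_le_rpow hpq.sub_one_pos
    (ofReal_eq_ofReal_mul_ofReal_sub_one hpq) (norm_dualityFun_le hpq.lt.ne') f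

theorem integrable_mul_dualityFun (hpq : p.HolderConjugate q) {f g : α → ℝ}
    (hf : MemLp f (ENNReal.ofReal p) μ) (hg : MemLp g (ENNReal.ofReal p) μ) :
    Integrable (fun x => f x * dualityFun p (g x)) μ :=
  have := hpq.ennrealOfReal
  hf.integrable_mul (memLp_dualityFun_comp hpq hg)

theorem norm_rpow_eq_integral_norm_rpow {E : Type*} [NormedAddCommGroup E] (hp : 0 < p)
    (f : Lp E (ENNReal.ofReal p) μ) : ‖f‖ ^ p = ∫ x, ‖f x‖ ^ p ∂μ := by
  have hnonneg : 0 ≤ ∫ x, ‖f x‖ ^ p ∂μ := by positivity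
  rw [Lp.norm_def, toReal_eLpNorm (Lp.aestronglyMeasurable f),
    lpNorm_eq_integral_norm_rpow_toReal (by simpa using hp) ENNReal.ofReal_ne_top
      (Lp.aestronglyMeasurable f), ENNReal.toReal_ofReal hp.le, Real.rpow_inv_rpow hnonneg hp.ne']

variable [Fact (1 ≤ ENNReal.ofReal p)] [Fact (1 ≤ ENNReal.ofReal q)]

theorem continuous_lpDualityMap (hpq : p.HolderConjugate q) :
    Continuous (lpDualityMap (μ := μ) hpq) := by
  refine continuous_iff_seqContinuous.2 fun f g hfg => ?_
  refine (Lp.tendsto_Lp_iff_tendsto_eLpNorm'' _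
    (fun n => memLp_dualityFun_comp hpq (Lp.memLp (f n))) _ _).2 ?_
  exact tendsto_eLpNorm_comp_sub_of_norm_le_rpow Fact.out ENNReal.ofReal_ne_top Fact.out
    ENNReal.ofReal_ne_top hpq.sub_one_pos (ofReal_eq_ofReal_mul_ofReal_sub_one hpq)
    (continuous_dualityFun hpq.lt) (norm_dualityFun_le hpq.lt.ne') (fun n => Lp.memLp (f n))
    (Lp.memLp g) ((Lp.tendsto_Lp_iff_tendsto_eLpNorm' _ _).1 hfg)

/-- The canonical map from `L^p` to the dual of `L^q`, sending `f` to `g ↦ ∫ f g`. -/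
noncomputable def lpToDual (hpq : p.HolderConjugate q) :
    Lp ℝ (ENNReal.ofReal p) μ →L[ℝ] Lp ℝ (ENNReal.ofReal q) μ →L[ℝ] ℝ :=
  haveI := hpq.ennrealOfReal
  (ContinuousLinearMap.mul ℝ ℝ).lpPairing μ (ENNReal.ofReal p) (ENNReal.ofReal q)

theorem lpToDual_apply (hpq : p.HolderConjugate q) (f : Lp ℝ (ENNReal.ofReal p) μ)
    (g : Lp ℝ (ENNReal.ofReal q) μ) : lpToDual hpq f g = ∫ x, f x * g x ∂μ :=
  haveI := hpq.ennrealOfReal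
  (ContinuousLinearMap.mul ℝ ℝ).lpPairing_eq_integral f g

theorem lpToDual_lpDualityMap (hpq : p.HolderConjugate q) (f g : Lp ℝ (ENNReal.ofReal p) μ) :
    lpToDual hpq f (lpDualityMap hpq g) = ∫ x, f x * dualityFun p (g x) ∂μ := by
  rw [lpToDual_apply]
  refine integral_congr_ae ?_
  filter_upwards [coeFn_lpDualityMap hpq g] with x hx
  rw [hx, Function.comp_apply]

theorem lpToDual_lpDualityMap_self (hpq : p.HolderConjugate q)
    (f : Lp ℝ (ENNReal.ofReal p) μ) : lpToDual hpq f (lpDualityMap hpq f) = ‖f‖ ^ p := by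
  simp only [lpToDual_lpDualityMap, mul_dualityFun hpq.ne_zero,
    norm_rpow_eq_integral_norm_rpow hpq.pos, Real.norm_eq_abs]

theorem integral_dualityFun_add_mul (hpq : p.HolderConjugate q)
    (f g : Lp ℝ (ENNReal.ofReal p) μ) :
    ∫ x, (dualityFun p (f x) + dualityFun p (g x)) * g x ∂μ =
      lpToDual hpq g (lpDualityMap hpq f) + ‖g‖ ^ p := by
  rw [← lpToDual_lpDualityMap_self hpq, lpToDual_lpDualityMap, lpToDual_lpDualityMap,
    ← integral_add (integrable_mul_dualityFun hpq (Lp.memLp g) (Lp.memLp f))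
      (integrable_mul_dualityFun hpq (Lp.memLp g) (Lp.memLp g))]
  exact integral_congr_ae (ae_of_all _ fun x => by ring)

theorem norm_lpToDual_apply_apply_le (hpq : p.HolderConjugate q)
    (f : Lp ℝ (ENNReal.ofReal p) μ) (g : Lp ℝ (ENNReal.ofReal q) μ) :
    ‖lpToDual hpq f g‖ ≤ ‖f‖ * ‖g‖ := by
  have := hpq.ennrealOfReal
  calc ‖lpToDual hpq f g‖ = ‖L1.integral ((ContinuousLinearMap.mul ℝ ℝ).holder 1 f g)‖ := by
        rw [lpToDual_apply, L1.integral_eq_integral]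
        exact congrArg norm
          (integral_congr_ae ((ContinuousLinearMap.mul ℝ ℝ).coeFn_holder f g).symm)
    _ ≤ ‖(ContinuousLinearMap.mul ℝ ℝ).holder 1 f g‖ := L1.norm_integral_le _
    _ ≤ ‖ContinuousLinearMap.mul ℝ ℝ‖ * ‖f‖ * ‖g‖ :=
        ContinuousLinearMap.norm_holder_apply_apply_le _ f g
    _ = ‖f‖ * ‖g‖ := by rw [ContinuousLinearMap.opNorm_mul, one_mul]

theorem lpToDual_lpDualityMap_le (hpq : p.HolderConjugate q) (f g : Lp ℝ (ENNReal.ofReal p) μ) :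
    lpToDual hpq f (lpDualityMap hpq g) ≤ ‖f‖ * ‖g‖ ^ (p - 1) :=
  calc lpToDual hpq f (lpDualityMap hpq g) ≤ ‖f‖ * ‖lpDualityMap hpq g‖ :=
        (le_abs_self _).trans (norm_lpToDual_apply_apply_le hpq f _)
    _ ≤ ‖f‖ * ‖g‖ ^ (p - 1) := by gcongr; exact norm_lpDualityMap_le hpq g

theorem norm_le_norm_lpToDual (hpq : p.HolderConjugate q) (f : Lp ℝ (ENNReal.ofReal p) μ) :
    ‖f‖ ≤ ‖lpToDual hpq f‖ := by
  rcases (norm_nonneg f).eq_or_lt with hf | hf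
  · exact hf ▸ norm_nonneg _
  refine le_of_mul_le_mul_right ?_ (Real.rpow_pos_of_pos hf (p - 1))
  calc ‖f‖ * ‖f‖ ^ (p - 1) = ‖f‖ ^ p := by
        rw [mul_comm, ← Real.rpow_add_one hf.ne', sub_add_cancel]
    _ = lpToDual hpq f (lpDualityMap hpq f) := (lpToDual_lpDualityMap_self hpq f).symm
    _ ≤ ‖lpToDual hpq f‖ * ‖lpDualityMap hpq f‖ :=
        (le_abs_self _).trans ((lpToDual hpq f).le_opNorm _)
    _ ≤ ‖lpToDual hpq f‖ * ‖f‖ ^ (p - 1) := by gcongr; exact norm_lpDualityMap_le hpq f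

theorem norm_rpow_add_lpToDual_sub_le (hpq : p.HolderConjugate q)
    (f g : Lp ℝ (ENNReal.ofReal p) μ) :
    ‖f‖ ^ p + p * lpToDual hpq (g - f) (lpDualityMap hpq f) ≤ ‖g‖ ^ p := by
  have hyoung := Real.young_inequality_of_nonneg (norm_nonneg g)
    (Real.rpow_nonneg (norm_nonneg f) (p - 1)) hpq
  rw [← Real.rpow_mul (norm_nonneg f), hpq.sub_one_mul_conj] at hyoung
  have hscaled : p * (‖g‖ * ‖f‖ ^ (p - 1)) ≤ ‖g‖ ^ p + (p - 1) * ‖f‖ ^ p :=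
    calc p * (‖g‖ * ‖f‖ ^ (p - 1)) ≤ p * (‖g‖ ^ p / p + ‖f‖ ^ p / q) :=
          mul_le_mul_of_nonneg_left hyoung hpq.nonneg
      _ = ‖g‖ ^ p + p / q * ‖f‖ ^ p := by field [hpq.ne_zero, hpq.symm.ne_zero]
      _ = ‖g‖ ^ p + (p - 1) * ‖f‖ ^ p := by rw [hpq.div_conj_eq_sub_one]
  have hholder := mul_le_mul_of_nonneg_left (lpToDual_lpDualityMap_le hpq g f) hpq.nonneg
  rw [map_sub, sub_apply, lpToDual_lpDualityMap_self]
  linarith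

theorem exists_norm_le_of_tendsto_lpToDual (hpq : p.HolderConjugate q)
    {z : ℕ → Lp ℝ (ENNReal.ofReal p) μ} {z₀ : Lp ℝ (ENNReal.ofReal p) μ}
    (hz : ∀ w, Tendsto (fun k => lpToDual hpq (z k) w) atTop (𝓝 (lpToDual hpq z₀ w))) :
    ∃ C, ∀ k, ‖z k‖ ≤ C := by
  obtain ⟨C, hC⟩ := exists_opNorm_le_of_tendsto_apply hz
  exact ⟨C, fun k => (norm_le_norm_lpToDual hpq (z k)).trans (hC k)⟩

end DualityMap

theorem F_A_property_general {α : Type*} [MeasurableSpace α] {μ : Measure α} {p q : ℝ}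
    (hpq : p.HolderConjugate q) [Fact (1 ≤ ENNReal.ofReal p)]
    {y z : ℕ → Lp ℝ (ENNReal.ofReal p) μ} {y₀ z₀ : Lp ℝ (ENNReal.ofReal p) μ}
    (hy : Tendsto y atTop (𝓝 y₀))
    (hz : ∀ w : Lp ℝ (ENNReal.ofReal q) μ,
      Tendsto (fun k => ∫ x, z k x * w x ∂μ) atTop (𝓝 (∫ x, z₀ x * w x ∂μ))) :
    ∫ x, (|y₀ x| ^ (p - 2) * y₀ x + |z₀ x| ^ (p - 2) * z₀ x) * z₀ x ∂μ ≤
      liminf (fun k => ∫ x, (|y k x| ^ (p - 2) * y k x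
        + |z k x| ^ (p - 2) * z k x) * z k x ∂μ) atTop := by
  have : Fact (1 ≤ ENNReal.ofReal q) := ⟨ENNReal.one_le_ofReal.2 hpq.symm.lt.le⟩
  simp only [← lpToDual_apply hpq] at hz
  have hsplit (f g : Lp ℝ (ENNReal.ofReal p) μ) :
      ∫ x, (|f x| ^ (p - 2) * f x + |g x| ^ (p - 2) * g x) * g x ∂μ =
        lpToDual hpq g (lpDualityMap hpq f) + ‖g‖ ^ p := integral_dualityFun_add_mul hpq f g
  simp only [hsplit]
  have hpair : Tendsto (fun k => lpToDual hpq (z k) (lpDualityMap hpq (y k))) atTop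
      (𝓝 (lpToDual hpq z₀ (lpDualityMap hpq y₀))) :=
    tendsto_apply_of_tendsto_apply_of_tendsto hz
      (((continuous_lpDualityMap hpq).tendsto y₀).comp hy)
  have hsubgradient : Tendsto
      (fun k => ‖z₀‖ ^ p + p * lpToDual hpq (z k - z₀) (lpDualityMap hpq z₀))
      atTop (𝓝 (‖z₀‖ ^ p)) := by
    simpa using (((hz (lpDualityMap hpq z₀)).sub_const
      (lpToDual hpq z₀ (lpDualityMap hpq z₀))).const_mul p).const_add (‖z₀‖ ^ p)
  obtain ⟨C, hC⟩ := exists_norm_le_of_tendsto_lpToDual hpq hz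
  have hnorm_bdd : IsBoundedUnder (· ≤ ·) atTop fun k => ‖z k‖ ^ p :=
    isBoundedUnder_of ⟨C ^ p, fun k => Real.rpow_le_rpow (norm_nonneg _) (hC k) hpq.nonneg⟩
  rw [← (hpair.add hsubgradient).liminf_eq]
  refine liminf_le_liminf (Eventually.of_forall fun k => ?_)
    (hpair.add hsubgradient).isBoundedUnder_ge
    (isBoundedUnder_le_add hpair.isBoundedUnder_le hnorm_bdd).isCoboundedUnder_ge
  gcongr
  exact norm_rpow_add_lpToDual_sub_le hpq z₀ (z k)

/-- the (𝔄)-property of `F(y,z) = |y|^{p-2}y + |z|^{p-2}z`: if `y_k → y` strongly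
in `L^p` and `z_k → z` weakly in `L^p`, then
`liminf ∫ F(y_k,z_k) z_k dx ≥ ∫ F(y,z) z dx`. -/
theorem F_A_property
    {N : ℕ} (hN : 1 ≤ N)
    (Ω : Set (EuclideanSpace ℝ (Fin N))) (hΩo : IsOpen Ω)
    (hΩb : Bornology.IsBounded Ω)
    (p q : ℝ) (hp : 2 ≤ p) (hq : q = p / (p - 1))
    [Fact (1 ≤ ENNReal.ofReal p)] [Fact (1 ≤ ENNReal.ofReal q)]
    (μ : Measure (EuclideanSpace ℝ (Fin N))) (hμ : μ = volume.restrict Ω)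
    (y z : ℕ → Lp ℝ (ENNReal.ofReal p) μ)
    (y₀ z₀ : Lp ℝ (ENNReal.ofReal p) μ)
    -- strong convergence y_k → y₀ in L^p
    (hy : Tendsto (fun k => ‖y k - y₀‖) atTop (𝓝 0))
    -- weak convergence z_k → z₀ in L^p
    (hz : ∀ w : Lp ℝ (ENNReal.ofReal q) μ,
      Tendsto (fun k => ∫ x, (z k) x * w x ∂μ) atTop (𝓝 (∫ x, z₀ x * w x ∂μ))) :
    (∫ x, (|y₀ x| ^ (p - 2) * y₀ x + |z₀ x| ^ (p - 2) * z₀ x) * z₀ x ∂μ) ≤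
      Filter.liminf
        (fun k => ∫ x, (|(y k) x| ^ (p - 2) * (y k) x
          + |(z k) x| ^ (p - 2) * (z k) x) * (z k) x ∂μ) atTop :=
  F_A_property_general ((Real.holderConjugate_iff_eq_conjExponent (by linarith)).2 hq)
    (tendsto_iff_norm_sub_tendsto_zero.2 hy) hz
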